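/- (Heine's transformation) Let 0<q<1, a,c∈ℂ, b,z∈ℂ with |b|<1 and |z|<1, and suppose c and az do not lie in {1,q^{-1},q^{-2},…}. Then ₂φ₁(a,b;c;q,z) = ((az;q)_∞ (b;q)_∞ / ((z;q)_∞ (c;q)_∞)) · ₂φ₁(c/b, z; az; q, b). -/

import Mathlib

/-!
Heine's argument. The `q`-binomial series `f(z) = ∑ (a;q)_n / (q;q)_n z^n` satisfies
`(1 - z) f(z) = (1 - a z) f(qz)`; iterating and using `f(z q^n) → f(0) = 1` gives the `q`-binomial
theorem `f(z) = (az;q)_∞ / (z;q)_∞`.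

Put `c = t b`. Then `(b;q)_n / (c;q)_n = (b;q)_∞ / (c;q)_∞ · (c q^n;q)_∞ / (b q^n;q)_∞`, and
expanding the last quotient by the `q`-binomial theorem turns `₂φ₁(a,b;c;q,z)`, up to the factor
`(b;q)_∞ / (c;q)_∞`, into a double series whose general term
`(a;q)_n / (q;q)_n · z^n · (t;q)_m / (q;q)_m · b^m · q^{nm}` is unchanged when `(a, z, n)` and
`(t, b, m)` trade places. Heine's transformation is the interchange of the two summations.
-/

noncomputable section

/-- The finite q-shifted factorial `(a;q)_k`. -/
def qp (q a : ℂ) (k : ℕ) : ℂ := ∏ j ∈ Finset.range k, (1 - a * q ^ j)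

/-- The infinite q-shifted factorial `(a;q)_∞`. -/
def qpi (q a : ℂ) : ℂ := ∏' j : ℕ, (1 - a * q ^ j)

/-- The basic hypergeometric series `₂φ₁(a,b;c;q,z)`. -/
def phi21 (q a b c z : ℂ) : ℂ :=
  ∑' k : ℕ, qp q a k * qp q b k / (qp q c k * qp q q k) * z ^ k

open Filter Topology

section

variable {q : ℂ}

lemma norm_mul_pow_lt_one (hq : ‖q‖ < 1) {a : ℂ} (ha : ‖a‖ < 1) (n : ℕ) : ‖a * q ^ n‖ < 1 := by
  rw [norm_mul, norm_pow]
  exact mul_lt_one_of_nonneg_of_lt_one_left (norm_nonneg a) ha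
    (pow_le_one₀ (norm_nonneg q) hq.le)

lemma mul_pow_ne_one_of_norm_lt_one (hq : ‖q‖ < 1) {a : ℂ} (ha : ‖a‖ < 1) (n : ℕ) :
    a * q ^ n ≠ 1 := fun h => by
  simpa [h] using norm_mul_pow_lt_one hq ha n

lemma qp_zero (q a : ℂ) : qp q a 0 = 1 := Finset.prod_range_zero _

lemma qp_succ (q a : ℂ) (k : ℕ) : qp q a (k + 1) = qp q a k * (1 - a * q ^ k) :=
  Finset.prod_range_succ _ _

lemma qp_ne_zero {a : ℂ} (ha : ∀ n : ℕ, a * q ^ n ≠ 1) (k : ℕ) : qp q a k ≠ 0 :=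
  Finset.prod_ne_zero_iff.2 fun n _ => sub_ne_zero.2 (ha n).symm

lemma summable_norm_neg_mul_pow (hq : ‖q‖ < 1) (a : ℂ) :
    Summable fun n : ℕ => ‖-(a * q ^ n)‖ := by
  simpa using (summable_geometric_of_lt_one (norm_nonneg q) hq).mul_left ‖a‖

lemma multipliable_one_sub_mul_pow (hq : ‖q‖ < 1) (a : ℂ) :
    Multipliable fun n : ℕ => 1 - a * q ^ n := by
  simpa only [sub_eq_add_neg] using
    multipliable_one_add_of_summable (summable_norm_neg_mul_pow hq a)

lemma tendsto_qp (hq : ‖q‖ < 1) (a : ℂ) : Tendsto (qp q a) atTop (𝓝 (qpi q a)) :=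
  (multipliable_one_sub_mul_pow hq a).tendsto_prod_tprod_nat

lemma qpi_ne_zero (hq : ‖q‖ < 1) {a : ℂ} (ha : ∀ n : ℕ, a * q ^ n ≠ 1) : qpi q a ≠ 0 := by
  have h := tprod_one_add_ne_zero_of_summable (f := fun n : ℕ => -(a * q ^ n))
    (fun n => by simpa only [← sub_eq_add_neg] using sub_ne_zero.2 (ha n).symm)
    (summable_norm_neg_mul_pow hq a)
  simpa only [qpi, sub_eq_add_neg] using h

lemma qp_mul_qpi (hq : ‖q‖ < 1) (a : ℂ) (n : ℕ) : qp q a n * qpi q (a * q ^ n) = qpi q a := by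
  have shift (j : ℕ) : 1 - a * q ^ n * q ^ j = 1 - a * q ^ (j + n) := by ring
  have htail := multipliable_one_sub_mul_pow hq (a * q ^ n)
  simp only [shift] at htail
  rw [qp, qpi, qpi, tprod_congr shift]
  exact Multipliable.prod_mul_tprod_nat_mul' (f := fun j : ℕ => 1 - a * q ^ j) htail

/-- The coefficient `(a;q)_n / (q;q)_n` of the `q`-binomial series. -/
def phi10Coeff (q a : ℂ) (n : ℕ) : ℂ := qp q a n / qp q q n

/-- The `q`-binomial series `₁φ₀(a;-;q,z)`. -/
def phi10 (q a z : ℂ) : ℂ := ∑' n, phi10Coeff q a n * z ^ n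

lemma phi10Coeff_zero (q a : ℂ) : phi10Coeff q a 0 = 1 := by
  rw [phi10Coeff, qp_zero, qp_zero, div_one]

lemma phi10Coeff_succ_mul (a : ℂ) {n : ℕ} (hn : q ^ (n + 1) ≠ 1) :
    phi10Coeff q a (n + 1) * (1 - q ^ (n + 1)) = phi10Coeff q a n * (1 - a * q ^ n) := by
  rw [pow_succ'] at hn ⊢
  rw [phi10Coeff, phi10Coeff, qp_succ, qp_succ, mul_div_mul_comm, mul_assoc,
    div_mul_cancel₀ _ (sub_ne_zero.2 hn.symm)]

lemma exists_norm_phi10Coeff_le (hq : ‖q‖ < 1) (a : ℂ) : ∃ C, ∀ n, ‖phi10Coeff q a n‖ ≤ C := by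
  have hlim : Tendsto (phi10Coeff q a) atTop (𝓝 (qpi q a / qpi q q)) :=
    (tendsto_qp hq a).div (tendsto_qp hq q)
      (qpi_ne_zero hq (mul_pow_ne_one_of_norm_lt_one hq hq))
  obtain ⟨C, hC⟩ := hlim.norm.bddAbove_range
  exact ⟨C, fun n => hC ⟨n, rfl⟩⟩

lemma summable_norm_phi10 (hq : ‖q‖ < 1) (a : ℂ) {z : ℂ} (hz : ‖z‖ < 1) :
    Summable fun n => ‖phi10Coeff q a n * z ^ n‖ := by
  obtain ⟨C, hC⟩ := exists_norm_phi10Coeff_le hq a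
  refine .of_nonneg_of_le (fun _ => norm_nonneg _) (fun n => ?_)
    ((summable_geometric_of_lt_one (norm_nonneg z) hz).mul_left C)
  rw [norm_mul, norm_pow]
  gcongr
  exact hC n

lemma phi10_zero (q a : ℂ) : phi10 q a 0 = 1 := by
  rw [phi10, tsum_eq_single 0 fun n hn => by rw [zero_pow hn, mul_zero], pow_zero, mul_one,
    phi10Coeff_zero]

lemma continuousAt_phi10_zero (hq : ‖q‖ < 1) (a : ℂ) : ContinuousAt (phi10 q a) 0 := by
  have hhalf : ‖(1 / 2 : ℂ)‖ < 1 := by norm_num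
  have hball : ∀ᶠ z : ℂ in 𝓝 0, ‖z‖ < ‖(1 / 2 : ℂ)‖ :=
    continuous_norm.continuousAt.eventually_lt_const (by norm_num)
  refine tendsto_tsum_of_dominated_convergence (summable_norm_phi10 hq a hhalf)
    (fun n => ((continuous_id.pow n).const_mul _).continuousAt) ?_
  filter_upwards [hball] with z hz n
  rw [norm_mul, norm_mul, norm_pow, norm_pow]
  gcongr

/-- The functional equation comes from comparing coefficients in
`f(z) - f(qz) = z f(z) - a z f(qz)`. -/
lemma one_sub_mul_phi10 (hq : ‖q‖ < 1) (a : ℂ) {z : ℂ} (hz : ‖z‖ < 1) :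
    (1 - z) * phi10 q a z = (1 - a * z) * phi10 q a (z * q) := by
  have hzq : ‖z * q‖ < 1 := by simpa only [pow_one] using norm_mul_pow_lt_one hq hz 1
  have sz := (summable_norm_phi10 hq a hz).of_norm
  have szq := (summable_norm_phi10 hq a hzq).of_norm
  have hcoeff (n : ℕ) :
      phi10Coeff q a (n + 1) * z ^ (n + 1) - phi10Coeff q a (n + 1) * (z * q) ^ (n + 1) =
        z * (phi10Coeff q a n * z ^ n) - a * z * (phi10Coeff q a n * (z * q) ^ n) := by
    have hn : q ^ (n + 1) ≠ 1 := by
      simpa only [pow_succ'] using mul_pow_ne_one_of_norm_lt_one hq hq n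
    rw [mul_pow, mul_pow]
    linear_combination z ^ (n + 1) * phi10Coeff_succ_mul a hn
  have hseries : phi10 q a z - phi10 q a (z * q) =
      z * phi10 q a z - a * z * phi10 q a (z * q) := by
    simp only [phi10]
    rw [← sz.tsum_sub szq, (sz.sub szq).tsum_eq_zero_add, pow_zero, pow_zero, sub_self, zero_add,
      tsum_congr hcoeff, (sz.mul_left z).tsum_sub (szq.mul_left (a * z)), tsum_mul_left,
      tsum_mul_left]
  linear_combination hseries

lemma qp_mul_phi10 (hq : ‖q‖ < 1) (a : ℂ) {z : ℂ} (hz : ‖z‖ < 1) (n : ℕ) :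
    qp q z n * phi10 q a z = qp q (a * z) n * phi10 q a (z * q ^ n) := by
  induction n with
  | zero => rw [qp_zero, qp_zero, pow_zero, mul_one]
  | succ n ih =>
    have h := one_sub_mul_phi10 hq a (norm_mul_pow_lt_one hq hz n)
    rw [qp_succ, qp_succ, pow_succ, ← mul_assoc z]
    linear_combination (1 - z * q ^ n) * ih + qp q (a * z) n * h

theorem phi10_eq_qpi_div_qpi (hq : ‖q‖ < 1) (a : ℂ) {z : ℂ} (hz : ‖z‖ < 1) :
    phi10 q a z = qpi q (a * z) / qpi q z := by
  have hzq : Tendsto (fun n : ℕ => z * q ^ n) atTop (𝓝 0) := by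
    simpa only [mul_zero] using (tendsto_pow_atTop_nhds_zero_of_norm_lt_one hq).const_mul z
  have hlim : Tendsto (fun n : ℕ => phi10 q a (z * q ^ n)) atTop (𝓝 1) := by
    simpa only [phi10_zero, Function.comp_def] using
      (continuousAt_phi10_zero hq a).tendsto.comp hzq
  have hleft := (tendsto_qp hq z).mul_const (phi10 q a z)
  have hright := (tendsto_qp hq (a * z)).mul hlim
  have hmul : qpi q z * phi10 q a z = qpi q (a * z) * 1 :=
    tendsto_nhds_unique hleft (hright.congr fun n => (qp_mul_phi10 hq a hz n).symm)
  rw [eq_div_iff (qpi_ne_zero hq (mul_pow_ne_one_of_norm_lt_one hq hz)), mul_comm, hmul, mul_one]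

lemma qp_div_qp_mul (hq : ‖q‖ < 1) {b t : ℂ} (hb : ‖b‖ < 1) (htb : ∀ n : ℕ, t * b * q ^ n ≠ 1)
    (n : ℕ) :
    qp q b n / qp q (t * b) n = qpi q b / qpi q (t * b) * phi10 q t (b * q ^ n) := by
  have hbn := norm_mul_pow_lt_one hq hb n
  have hbn0 := qpi_ne_zero hq (mul_pow_ne_one_of_norm_lt_one hq hbn)
  have htb0 := qpi_ne_zero hq htb
  rw [← qp_mul_qpi hq (t * b) n] at htb0 ⊢
  rw [phi10_eq_qpi_div_qpi hq t hbn, ← qp_mul_qpi hq b n, ← mul_assoc t]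
  have hqp0 := left_ne_zero_of_mul htb0
  have hqpi0 := right_ne_zero_of_mul htb0
  field_simp

/-- The general term of Heine's double series: the product of the general terms of
`₁φ₀(a;-;q,z)` and `₁φ₀(t;-;q,b)`, coupled by `q^{nm}`. -/
def heineTerm (q a z t b : ℂ) (n m : ℕ) : ℂ :=
  phi10Coeff q a n * z ^ n * (phi10Coeff q t m * b ^ m) * q ^ (n * m)

lemma heineTerm_swap (q a z t b : ℂ) (n m : ℕ) :
    heineTerm q t b a z m n = heineTerm q a z t b n m := by
  rw [heineTerm, heineTerm, mul_comm m n, mul_comm (phi10Coeff q t m * b ^ m)]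

lemma tsum_heineTerm (q a z t b : ℂ) (n : ℕ) :
    ∑' m, heineTerm q a z t b n m = phi10Coeff q a n * z ^ n * phi10 q t (b * q ^ n) := by
  rw [phi10, ← tsum_mul_left]
  refine tsum_congr fun m => ?_
  rw [heineTerm, mul_pow, ← pow_mul]
  ring

lemma summable_heineTerm (hq : ‖q‖ < 1) (a t : ℂ) {z b : ℂ} (hz : ‖z‖ < 1) (hb : ‖b‖ < 1) :
    Summable (Function.uncurry (heineTerm q a z t b)) := by
  have hprod := (summable_norm_phi10 hq a hz).mul_of_nonneg (summable_norm_phi10 hq t hb)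
    (fun _ => norm_nonneg _) (fun _ => norm_nonneg _)
  refine hprod.of_norm_bounded fun ⟨n, m⟩ => ?_
  rw [Function.uncurry_apply_pair, heineTerm, norm_mul, norm_mul, norm_pow q]
  exact mul_le_of_le_one_right (by positivity) (pow_le_one₀ (norm_nonneg q) hq.le)

lemma phi21_eq_mul_tsum_heineTerm (hq : ‖q‖ < 1) (a z : ℂ) {b t : ℂ} (hb : ‖b‖ < 1)
    (htb : ∀ n : ℕ, t * b * q ^ n ≠ 1) :
    phi21 q a b (t * b) z = qpi q b / qpi q (t * b) * ∑' n, ∑' m, heineTerm q a z t b n m := by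
  rw [phi21, ← tsum_mul_left]
  refine tsum_congr fun n => ?_
  calc qp q a n * qp q b n / (qp q (t * b) n * qp q q n) * z ^ n
      = phi10Coeff q a n * z ^ n * (qp q b n / qp q (t * b) n) := by rw [phi10Coeff]; ring
    _ = qpi q b / qpi q (t * b) * ∑' m, heineTerm q a z t b n m := by
      rw [qp_div_qp_mul hq hb htb, tsum_heineTerm]; ring

theorem stmt3_general (hq : ‖q‖ < 1) {a b t z : ℂ} (hb : ‖b‖ < 1) (hz : ‖z‖ < 1)
    (htb : ∀ n : ℕ, t * b * q ^ n ≠ 1) (haz : ∀ n : ℕ, a * z * q ^ n ≠ 1) :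
    phi21 q a b (t * b) z =
      (qpi q (a * z) * qpi q b) / (qpi q z * qpi q (t * b)) * phi21 q t z (a * z) b := by
  have hswap : ∑' m, ∑' n, heineTerm q t b a z m n = ∑' n, ∑' m, heineTerm q a z t b n m := by
    simp only [heineTerm_swap q a z t b]
    exact (summable_heineTerm hq a t hz hb).tsum_comm
  have hz0 := qpi_ne_zero hq (mul_pow_ne_one_of_norm_lt_one hq hz)
  have haz0 := qpi_ne_zero hq haz
  rw [phi21_eq_mul_tsum_heineTerm hq a z hb htb, phi21_eq_mul_tsum_heineTerm hq t b hz haz, hswap]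
  field_simp

end

/-- Heine's transformation:
`₂φ₁(a,b;c;q,z) = ((az;q)_∞ (b;q)_∞ / ((z;q)_∞ (c;q)_∞)) ₂φ₁(c/b, z; az; q, b)`,
for `0<q<1`, `|b|<1`, `|z|<1` (with `b ≠ 0` so that `c/b` is meaningful) and
`c`, `az` not in `{1, q^{-1}, q^{-2}, …}`. -/
theorem stmt3 (q : ℝ) (hq0 : 0 < q) (hq1 : q < 1) (a b c z : ℂ)
    (hb : ‖b‖ < 1) (hb0 : b ≠ 0) (hz : ‖z‖ < 1)
    (hc : ∀ n : ℕ, c * (q : ℂ) ^ n ≠ 1) (haz : ∀ n : ℕ, a * z * (q : ℂ) ^ n ≠ 1) :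
    phi21 (q : ℂ) a b c z =
      (qpi (q : ℂ) (a * z) * qpi (q : ℂ) b) / (qpi (q : ℂ) z * qpi (q : ℂ) c) *
        phi21 (q : ℂ) (c / b) z (a * z) b := by
  obtain ⟨t, rfl⟩ : ∃ t, c = t * b := ⟨c / b, (div_mul_cancel₀ c hb0).symm⟩
  simpa only [mul_div_cancel_right₀ t hb0] using
    stmt3_general (by simpa [abs_of_pos hq0]) hb hz hc haz
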